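/- Let C be a regular category and X an object with global support. Then X has factorable congruences if and only if X is regularly-coextensive. -/

import Mathlib

open CategoryTheory CategoryTheory.Limits

universe v u

variable {C : Type u} [Category.{v} C]

/-- `(p, q)` is a binary product diagram, exhibiting `X` as the product of `A` and `B`. -/
def IsBinaryProduct {X A B : C} (p : X ⟶ A) (q : X ⟶ B) : Prop :=
  Nonempty (IsLimit (BinaryFan.mk p q))

/-- `p : X ⟶ A` is a product projection. -/
def IsProductProjection {X A : C} (p : X ⟶ A) : Prop :=
  ∃ (B : C) (q : X ⟶ B), IsBinaryProduct p q

/-- A pushout square whose two legs belong to the class `M`. -/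
def IsMPushout (M : MorphismProperty C) {Z A B P : C}
    (f : Z ⟶ A) (g : Z ⟶ B) (a : A ⟶ P) (b : B ⟶ P) : Prop :=
  IsPushout f g a b ∧ M a ∧ M b

/-- `X` is an `M`-coextensive object. -/
structure MCoextensive (M : MorphismProperty C) (X : C) : Prop where
  pushout_exists : ∀ ⦃Y A : C⦄ (m : X ⟶ Y) (p : X ⟶ A), M m → IsProductProjection p →
    ∃ (P : C) (a : A ⟶ P) (b : Y ⟶ P), IsMPushout M p m a b
  isBinaryProduct_iff : ∀ ⦃A₁ A₂ Y B₁ B₂ : C⦄ (π₁ : X ⟶ A₁) (π₂ : X ⟶ A₂)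
    (f : X ⟶ Y) (p₁ : A₁ ⟶ B₁) (p₂ : A₂ ⟶ B₂) (π₁' : Y ⟶ B₁) (π₂' : Y ⟶ B₂),
    IsBinaryProduct π₁ π₂ → M f → M p₁ → M p₂ →
    π₁ ≫ p₁ = f ≫ π₁' → π₂ ≫ p₂ = f ≫ π₂' →
    (IsBinaryProduct π₁' π₂' ↔ (IsMPushout M π₁ f p₁ π₁' ∧ IsMPushout M π₂ f p₂ π₂'))

/-- The class of product projections. -/
def projections (C : Type u) [Category.{v} C] : MorphismProperty C :=
  fun _ _ f => IsProductProjection f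

/-- `X` is projection-coextensive. -/
def ProjectionCoextensive (X : C) : Prop := MCoextensive (projections C) X

/-- `f` is a regular epimorphism (a coequalizer of some parallel pair). -/
def IsRegularEpimorphism {X Y : C} (f : X ⟶ Y) : Prop :=
  ∃ (W : C) (a b : W ⟶ X) (h : a ≫ f = b ≫ f), Nonempty (IsColimit (Cofork.ofπ f h))

/-- The class of regular epimorphisms. -/
def regularEpis (C : Type u) [Category.{v} C] : MorphismProperty C :=
  fun _ _ f => IsRegularEpimorphism f

/-- `X` is regularly-coextensive. -/
def RegularlyCoextensive (X : C) : Prop := MCoextensive (regularEpis C) X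

/-- A regular category: finitely complete, coequalizers of kernel pairs, and
regular epimorphisms are stable under pullback. -/
class IsRegularCategory (C : Type u) [Category.{v} C] [HasFiniteLimits C] : Prop where
  hasCoequalizer_kernelPair : ∀ {X Y : C} (f : X ⟶ Y),
    HasCoequalizer (pullback.fst f f) (pullback.snd f f)
  regularEpi_stable : ∀ {X Y Z : C} (f : X ⟶ Y) (g : Z ⟶ Y),
    IsRegularEpimorphism f → IsRegularEpimorphism (pullback.snd f g)

/-- `X` has global support: the unique morphism to the terminal object is a regular epi. -/
def HasGlobalSupport [HasTerminal C] (X : C) : Prop :=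
  IsRegularEpimorphism (terminal.from X)

/-- `X` has factorable congruences: every effective equivalence relation on `X`
(the kernel pair of a morphism `f`) is, with respect to any binary product
decomposition `(π₁, π₂)` of `X`, the product of effective equivalence relations on
the factors, i.e. the kernel pair of `f` and the kernel pair of
`⟨π₁ ≫ g, π₂ ≫ h⟩ : X ⟶ C' ⨯ D` coincide as subobjects of `X × X`. -/
def HasFactorableCongruences {C : Type u} [Category.{v} C] [HasFiniteLimits C]
    (X : C) : Prop :=
  ∀ ⦃Y A B : C⦄ (f : X ⟶ Y) (π₁ : X ⟶ A) (π₂ : X ⟶ B), IsBinaryProduct π₁ π₂ →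
    ∃ (C' D : C) (g : A ⟶ C') (h : B ⟶ D),
      ∀ ⦃Z : C⦄ (a b : Z ⟶ X),
        a ≫ f = b ≫ f ↔
          a ≫ prod.lift (π₁ ≫ g) (π₂ ≫ h) = b ≫ prod.lift (π₁ ≫ g) (π₂ ≫ h)

/-!
Consider two commutative squares under a product `X ≅ A₁ × A₂`, with vertical regular epimorphisms
`p₁`, `f`, `p₂` and bottom cone `(π₁', π₂')` on the codomain `Y` of `f`. The cone is a product
diagram if and only if the kernel pair of `f` is the product of those of `p₁` and `p₂`: the maps
`X ⟶ Y` and `p₁ × p₂` are then regular epimorphisms with the same kernel pair, so `Y ≅ B₁ × B₂`.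
When `X` has global support, such a factorization forces both squares to be pushouts, because any
two points of `A₁` identified by `p₁` can be lifted to `X` with a common second coordinate.
Conversely, if the congruence of `f` factors through some `g` and `h`, then the pushouts of `f`
along the projections map to `g` and `h`, so that they factor this congruence as well.
-/

section Category

variable {X Y A A₁ A₂ B B₁ B₂ P Q T Z : C}

theorem isRegularEpimorphism_iff (f : X ⟶ Y) : IsRegularEpimorphism f ↔ IsRegularEpi f :=
  ⟨fun ⟨W, a, b, h, ⟨hc⟩⟩ => ⟨⟨W, a, b, h, hc⟩⟩, fun ⟨⟨W, a, b, h, hc⟩⟩ => ⟨W, a, b, h, ⟨hc⟩⟩⟩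

theorem exists_fac_of_kernelPair_le (f : X ⟶ Y) [IsRegularEpi f] (u : X ⟶ T)
    (h : ∀ ⦃Z : C⦄ (a b : Z ⟶ X), a ≫ f = b ≫ f → a ≫ u = b ≫ u) : ∃ v : Y ⟶ T, f ≫ v = u :=
  ⟨IsRegularEpi.desc f u (h _ _ (IsRegularEpi.w f)), IsRegularEpi.fac f u _⟩

theorem isIso_of_kernelPair_comp_le (f : X ⟶ Y) (m : Y ⟶ T) [Epi f] [IsRegularEpi (f ≫ m)]
    (h : ∀ ⦃Z : C⦄ (a b : Z ⟶ X), a ≫ f ≫ m = b ≫ f ≫ m → a ≫ f = b ≫ f) : IsIso m := by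
  obtain ⟨v, hv⟩ := exists_fac_of_kernelPair_le (f ≫ m) f h
  have hmv : m ≫ v = 𝟙 Y := by rw [← cancel_epi f, ← Category.assoc, hv, Category.comp_id]
  have : IsSplitMono m := ⟨⟨v, hmv⟩⟩
  have : Epi m := epi_of_epi f m
  exact isIso_of_epi_of_isSplitMono m

namespace IsBinaryProduct

variable {p : X ⟶ A} {q : X ⟶ B}

theorem hom_ext (h : IsBinaryProduct p q) {a b : Z ⟶ X} (hp : a ≫ p = b ≫ p)
    (hq : a ≫ q = b ≫ q) : a = b :=
  BinaryFan.IsLimit.hom_ext h.some hp hq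

theorem exists_lift (h : IsBinaryProduct p q) (a : Z ⟶ A) (b : Z ⟶ B) :
    ∃ l : Z ⟶ X, l ≫ p = a ∧ l ≫ q = b :=
  let ⟨l, hl⟩ := BinaryFan.IsLimit.lift' h.some a b
  ⟨l, hl⟩

theorem symm (h : IsBinaryProduct p q) : IsBinaryProduct q p :=
  h.map BinaryFan.isLimitFlip

end IsBinaryProduct

theorem isBinaryProduct_iff_isIso_lift [HasBinaryProduct A B] (p : X ⟶ A) (q : X ⟶ B) :
    IsBinaryProduct p q ↔ IsIso (prod.lift p q) :=
  (limit.isLimit (pair A B)).nonempty_isLimit_iff_isIso_lift (t := BinaryFan.mk p q)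

/-- The congruence (kernel pair) of `f` is the product, along `⟨π₁, π₂⟩`, of the congruences of
`g` and `h`. Kernel pairs are encoded by the pairs of generalized elements they identify. -/
def FactorsCongruence (π₁ : X ⟶ A₁) (π₂ : X ⟶ A₂) (f : X ⟶ Y) (g : A₁ ⟶ P) (h : A₂ ⟶ Q) : Prop :=
  ∀ ⦃Z : C⦄ (a b : Z ⟶ X),
    a ≫ f = b ≫ f ↔ a ≫ π₁ ≫ g = b ≫ π₁ ≫ g ∧ a ≫ π₂ ≫ h = b ≫ π₂ ≫ h

theorem hasFactorableCongruences_iff [HasFiniteLimits C] (X : C) :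
    HasFactorableCongruences X ↔
      ∀ ⦃Y A B : C⦄ (f : X ⟶ Y) (π₁ : X ⟶ A) (π₂ : X ⟶ B), IsBinaryProduct π₁ π₂ →
        ∃ (P Q : C) (g : A ⟶ P) (h : B ⟶ Q), FactorsCongruence π₁ π₂ f g h := by
  simp only [HasFactorableCongruences, FactorsCongruence, prod.comp_lift, prod.hom_ext_iff,
    prod.lift_fst, prod.lift_snd]

section Square

variable {π₁ : X ⟶ A₁} {π₂ : X ⟶ A₂} {f : X ⟶ Y} {p₁ : A₁ ⟶ B₁} {p₂ : A₂ ⟶ B₂}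
  {π₁' : Y ⟶ B₁} {π₂' : Y ⟶ B₂}

theorem IsBinaryProduct.factorsCongruence (hY : IsBinaryProduct π₁' π₂')
    (w₁ : π₁ ≫ p₁ = f ≫ π₁') (w₂ : π₂ ≫ p₂ = f ≫ π₂') : FactorsCongruence π₁ π₂ f p₁ p₂ := by
  intro Z a b
  rw [w₁, w₂]
  refine ⟨fun hab => ⟨?_, ?_⟩, fun ⟨h₁, h₂⟩ => hY.hom_ext (by simpa using h₁) (by simpa using h₂)⟩
  all_goals rw [reassoc_of% hab]

namespace FactorsCongruence

variable {g : A₁ ⟶ P} {h : A₂ ⟶ Q}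

theorem symm (hF : FactorsCongruence π₁ π₂ f g h) : FactorsCongruence π₂ π₁ f h g :=
  fun _ a b => (hF a b).trans and_comm

theorem exists_fac_left (hF : FactorsCongruence π₁ π₂ f g h) [IsRegularEpi f] :
    ∃ g' : Y ⟶ P, f ≫ g' = π₁ ≫ g :=
  exists_fac_of_kernelPair_le f _ fun _ a b hab => ((hF a b).1 hab).1

theorem exists_fac_of_isPushout (hF : FactorsCongruence π₁ π₂ f g h) [IsRegularEpi f]
    (h₁ : IsPushout π₁ f p₁ π₁') : ∃ k : B₁ ⟶ P, p₁ ≫ k = g :=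
  let ⟨g', hg'⟩ := hF.exists_fac_left
  ⟨h₁.desc g g' hg'.symm, h₁.inl_desc _ _ _⟩

theorem of_isPushout (hF : FactorsCongruence π₁ π₂ f g h) [IsRegularEpi f]
    (h₁ : IsPushout π₁ f p₁ π₁') (h₂ : IsPushout π₂ f p₂ π₂') :
    FactorsCongruence π₁ π₂ f p₁ p₂ := by
  obtain ⟨k₁, rfl⟩ := hF.exists_fac_of_isPushout h₁
  obtain ⟨k₂, rfl⟩ := hF.symm.exists_fac_of_isPushout h₂
  refine fun Z a b => ⟨fun hab => ?_, fun ⟨e₁, e₂⟩ => (hF a b).2 ⟨?_, ?_⟩⟩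
  · rw [h₁.w, h₂.w, reassoc_of% hab, reassoc_of% hab]
    exact ⟨rfl, rfl⟩
  · rw [reassoc_of% e₁]
  · rw [reassoc_of% e₂]

end FactorsCongruence

end Square

end Category

theorem IsRegularCategory.regular (C : Type u) [Category.{v} C] [HasFiniteLimits C]
    [IsRegularCategory C] : Regular C where
  hasCoequalizer_of_isKernelPair {X Y Z f g₁ g₂} h := by
    have := hasCoequalizer_kernelPair f
    exact hasColimit_of_iso (F := parallelPair (pullback.fst f f) (pullback.snd f f))
      (parallelPair.ext h.isoPullback (Iso.refl X) (by simp) (by simp))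
  regularEpiIsStableUnderBaseChange := .mk' fun X Y S f g _ hg => by
    have : IsRegularEpi (pullback.snd g f) :=
      (isRegularEpimorphism_iff _).1 (regularEpi_stable g f ((isRegularEpimorphism_iff g).2 hg))
    rw [← pullbackSymmetry_hom_comp_snd]
    exact (MorphismProperty.cancel_left_of_respectsIso (.regularEpi C) _ _).2 this

section Regular

variable [Regular C] {X Y A A₁ A₂ B B₁ B₂ T : C}

theorem isRegularEpi_comp (f : X ⟶ Y) (g : Y ⟶ T) [IsRegularEpi f] [IsRegularEpi g] :
    IsRegularEpi (f ≫ g) :=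
  have : StrongEpi (f ≫ g) := strongEpi_comp f g
  inferInstance

theorem isRegularEpi_of_comp (f : X ⟶ Y) (g : Y ⟶ T) [IsRegularEpi (f ≫ g)] : IsRegularEpi g :=
  have : StrongEpi g := strongEpi_of_strongEpi f g
  inferInstance

theorem exists_isRegularEpi_kernelPair_eq (f : X ⟶ Y) :
    ∃ (I : C) (e : X ⟶ I), IsRegularEpi e ∧
      ∀ ⦃Z : C⦄ (a b : Z ⟶ X), a ≫ f = b ≫ f ↔ a ≫ e = b ≫ e := by
  refine ⟨_, (Regular.strongEpiMonoFactorisation f).e, inferInstance, fun Z a b => ?_⟩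
  rw [← cancel_mono (Regular.strongEpiMonoFactorisation f).m, Category.assoc, Category.assoc,
    MonoFactorisation.fac]

theorem isRegularEpi_prodMap (p₁ : A₁ ⟶ B₁) (p₂ : A₂ ⟶ B₂) [IsRegularEpi p₁] [IsRegularEpi p₂] :
    IsRegularEpi (prod.map p₁ p₂) := by
  have map_id {A B : C} (p : A ⟶ B) [hp : IsRegularEpi p] (T : C) :
      IsRegularEpi (prod.map p (𝟙 T)) :=
    Regular.regularEpiIsStableUnderBaseChange.of_isPullback (.of_prod_fst_with_id p T) hp
  have := map_id p₁ A₂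
  have := map_id p₂ B₁
  have : IsRegularEpi (prod.map (𝟙 B₁) p₂ ≫ (prod.braiding B₁ B₂).hom) := by
    rw [braid_natural]
    exact isRegularEpi_comp _ _
  have : IsRegularEpi (prod.map (𝟙 B₁) p₂) :=
    ((MorphismProperty.regularEpi C).cancel_right_of_respectsIso _ _).1 this
  have hmap : prod.map p₁ p₂ = prod.map p₁ (𝟙 A₂) ≫ prod.map (𝟙 B₁) p₂ := by simp
  exact hmap ▸ isRegularEpi_comp _ _

theorem HasGlobalSupport.of_hom (hX : HasGlobalSupport X) (f : X ⟶ Y) : HasGlobalSupport Y := by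
  have : IsRegularEpi (f ≫ terminal.from Y) := by
    rw [terminal.comp_from]
    exact (isRegularEpimorphism_iff _).1 hX
  exact (isRegularEpimorphism_iff _).2 (isRegularEpi_of_comp f _)

theorem IsBinaryProduct.isRegularEpi_left {p : X ⟶ A} {q : X ⟶ B} (h : IsBinaryProduct p q)
    (hB : HasGlobalSupport B) : IsRegularEpi p :=
  Regular.regularEpiIsStableUnderBaseChange.of_isPullback
    (IsPullback.of_is_product h.some terminalIsTerminal).flip ((isRegularEpimorphism_iff _).1 hB)

variable {π₁ : X ⟶ A₁} {π₂ : X ⟶ A₂} {f : X ⟶ Y} {p₁ : A₁ ⟶ B₁} {p₂ : A₂ ⟶ B₂}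
  {π₁' : Y ⟶ B₁} {π₂' : Y ⟶ B₂}

theorem IsBinaryProduct.exists_fac_of_kernelPair_prod_id_le (hX : IsBinaryProduct π₁ π₂)
    (hA₂ : HasGlobalSupport A₂) [IsRegularEpi p₁]
    (hker : ∀ ⦃Z : C⦄ (a b : Z ⟶ X),
      a ≫ π₁ ≫ p₁ = b ≫ π₁ ≫ p₁ → a ≫ π₂ = b ≫ π₂ → a ≫ f = b ≫ f)
    {u : A₁ ⟶ T} {z : Y ⟶ T} (huz : π₁ ≫ u = f ≫ z) : ∃ v : B₁ ⟶ T, p₁ ≫ v = u := by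
  refine exists_fac_of_kernelPair_le p₁ u fun K k₁ k₂ hk => ?_
  -- Lifting `k₁`, `k₂` to `X` requires a point of `A₂`, which exists after passing to the cover
  -- `K ⨯ A₂ ⟶ K`.
  obtain ⟨a, ha₁, ha₂⟩ := hX.exists_lift ((prod.fst : K ⨯ A₂ ⟶ K) ≫ k₁) prod.snd
  obtain ⟨b, hb₁, hb₂⟩ := hX.exists_lift ((prod.fst : K ⨯ A₂ ⟶ K) ≫ k₂) prod.snd
  have hab : a ≫ f = b ≫ f :=
    hker a b (by rw [reassoc_of% ha₁, reassoc_of% hb₁, hk]) (ha₂.trans hb₂.symm)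
  have : IsRegularEpi (prod.fst : K ⨯ A₂ ⟶ K) :=
    IsBinaryProduct.isRegularEpi_left ⟨prodIsProd K A₂⟩ hA₂
  rw [← cancel_epi (prod.fst : K ⨯ A₂ ⟶ K)]
  calc prod.fst ≫ k₁ ≫ u = a ≫ f ≫ z := by rw [← reassoc_of% ha₁, huz]
    _ = b ≫ f ≫ z := by rw [reassoc_of% hab]
    _ = prod.fst ≫ k₂ ≫ u := by rw [← reassoc_of% hb₁, huz]

theorem IsBinaryProduct.isPushout_of_kernelPair_prod_id_le (hX : IsBinaryProduct π₁ π₂)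
    (hA₂ : HasGlobalSupport A₂) [Epi f] [IsRegularEpi p₁] (w : π₁ ≫ p₁ = f ≫ π₁')
    (hker : ∀ ⦃Z : C⦄ (a b : Z ⟶ X),
      a ≫ π₁ ≫ p₁ = b ≫ π₁ ≫ p₁ → a ≫ π₂ = b ≫ π₂ → a ≫ f = b ≫ f) :
    IsPushout π₁ f p₁ π₁' := by
  have fac (s : PushoutCocone π₁ f) : ∃ v : B₁ ⟶ s.pt, p₁ ≫ v = s.inl :=
    hX.exists_fac_of_kernelPair_prod_id_le hA₂ hker s.condition
  choose v hv using fac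
  refine ⟨⟨w⟩, ⟨PushoutCocone.IsColimit.mk w v hv (fun s => ?_) fun s m hm _ => ?_⟩⟩
  · rw [← cancel_epi f, ← reassoc_of% w, hv, s.condition]
  · rw [← cancel_epi p₁, hm, hv]

namespace FactorsCongruence

theorem isMPushout_left (hF : FactorsCongruence π₁ π₂ f p₁ p₂) (hX : IsBinaryProduct π₁ π₂)
    (hA₂ : HasGlobalSupport A₂) [Epi f] [IsRegularEpi p₁] (w : π₁ ≫ p₁ = f ≫ π₁') :
    IsMPushout (regularEpis C) π₁ f p₁ π₁' := by
  have := hX.isRegularEpi_left hA₂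
  have : IsRegularEpi (f ≫ π₁') := w ▸ isRegularEpi_comp π₁ p₁
  refine ⟨hX.isPushout_of_kernelPair_prod_id_le hA₂ w fun Z a b h₁ h₂ => (hF a b).2 ⟨h₁, ?_⟩,
    (isRegularEpimorphism_iff p₁).2 ‹IsRegularEpi p₁›,
    (isRegularEpimorphism_iff π₁').2 (isRegularEpi_of_comp f π₁')⟩
  rw [reassoc_of% h₂]

theorem isBinaryProduct (hF : FactorsCongruence π₁ π₂ f p₁ p₂) (hX : IsBinaryProduct π₁ π₂)
    [Epi f] [IsRegularEpi p₁] [IsRegularEpi p₂]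
    (w₁ : π₁ ≫ p₁ = f ≫ π₁') (w₂ : π₂ ≫ p₂ = f ≫ π₂') : IsBinaryProduct π₁' π₂' := by
  have : IsIso (prod.lift π₁ π₂) := (isBinaryProduct_iff_isIso_lift _ _).1 hX
  have hlift : prod.lift π₁ π₂ ≫ prod.map p₁ p₂ = f ≫ prod.lift π₁' π₂' := by
    rw [prod.lift_map, prod.comp_lift, w₁, w₂]
  have : IsRegularEpi (prod.map p₁ p₂) := isRegularEpi_prodMap p₁ p₂
  have : IsRegularEpi (f ≫ prod.lift π₁' π₂') := hlift ▸ isRegularEpi_comp _ _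
  refine (isBinaryProduct_iff_isIso_lift _ _).2
    (isIso_of_kernelPair_comp_le f _ fun Z a b hab => (hF a b).2 ?_)
  simpa only [prod.comp_lift, prod.hom_ext_iff, prod.lift_fst, prod.lift_snd, w₁, w₂] using hab

end FactorsCongruence

theorem HasFactorableCongruences.exists_isRegularEpi (hF : HasFactorableCongruences X)
    (f : X ⟶ Y) (hX : IsBinaryProduct π₁ π₂) :
    ∃ (P Q : C) (g : A₁ ⟶ P) (h : A₂ ⟶ Q),
      IsRegularEpi g ∧ IsRegularEpi h ∧ FactorsCongruence π₁ π₂ f g h := by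
  obtain ⟨P₀, Q₀, g₀, h₀, hgh₀⟩ := (hasFactorableCongruences_iff X).1 hF f π₁ π₂ hX
  obtain ⟨P, g, hg, hgker⟩ := exists_isRegularEpi_kernelPair_eq g₀
  obtain ⟨Q, h, hh, hhker⟩ := exists_isRegularEpi_kernelPair_eq h₀
  refine ⟨P, Q, g, h, hg, hh, fun Z a b => (hgh₀ a b).trans (and_congr ?_ ?_)⟩
  · simpa only [Category.assoc] using hgker (a ≫ π₁) (b ≫ π₁)
  · simpa only [Category.assoc] using hhker (a ≫ π₂) (b ≫ π₂)

theorem HasFactorableCongruences.regularlyCoextensive (hF : HasFactorableCongruences X)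
    (hgs : HasGlobalSupport X) : RegularlyCoextensive X where
  pushout_exists := by
    rintro Y A m p hm ⟨B, q, hX⟩
    have := (isRegularEpimorphism_iff m).1 hm
    obtain ⟨P, Q, g, h, hg, -, hgh⟩ := hF.exists_isRegularEpi m hX
    obtain ⟨g', hg'⟩ := hgh.exists_fac_left
    exact ⟨P, g, g', hgh.isMPushout_left hX (hgs.of_hom q) hg'.symm⟩
  isBinaryProduct_iff := by
    intro A₁ A₂ Y B₁ B₂ π₁ π₂ f p₁ p₂ π₁' π₂' hX hf hp₁ hp₂ w₁ w₂
    have := (isRegularEpimorphism_iff f).1 hf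
    have := (isRegularEpimorphism_iff p₁).1 hp₁
    have := (isRegularEpimorphism_iff p₂).1 hp₂
    constructor
    · intro hY
      have hp := hY.factorsCongruence w₁ w₂
      exact ⟨hp.isMPushout_left hX (hgs.of_hom π₂) w₁,
        hp.symm.isMPushout_left hX.symm (hgs.of_hom π₁) w₂⟩
    · rintro ⟨⟨h₁, -, -⟩, ⟨h₂, -, -⟩⟩
      obtain ⟨P, Q, g, h, hgh⟩ := (hasFactorableCongruences_iff X).1 hF f π₁ π₂ hX
      exact (hgh.of_isPushout h₁ h₂).isBinaryProduct hX w₁ w₂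

theorem RegularlyCoextensive.hasFactorableCongruences (hR : RegularlyCoextensive X) :
    HasFactorableCongruences X := by
  refine (hasFactorableCongruences_iff X).2 fun Y A B f π₁ π₂ hX => ?_
  obtain ⟨I, e, he, hker⟩ := exists_isRegularEpi_kernelPair_eq f
  have he' : regularEpis C e := (isRegularEpimorphism_iff e).2 he
  obtain ⟨P, g, g', hg⟩ := hR.pushout_exists e π₁ he' ⟨_, _, hX⟩
  obtain ⟨Q, h, h', hh⟩ := hR.pushout_exists e π₂ he' ⟨_, _, hX.symm⟩
  have hI : IsBinaryProduct g' h' :=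
    (hR.isBinaryProduct_iff π₁ π₂ e g h g' h' hX he' hg.2.1 hh.2.1 hg.1.w hh.1.w).2 ⟨hg, hh⟩
  exact ⟨P, Q, g, h, fun Z a b => (hker a b).trans (hI.factorsCongruence hg.1.w hh.1.w a b)⟩

end Regular

/-- An object with global support in a regular category has factorable congruences
if and only if it is regularly-coextensive. -/
theorem hasFactorableCongruences_iff_regularlyCoextensive
    {C : Type u} [Category.{v} C] [HasFiniteLimits C] [IsRegularCategory C]
    (X : C) (hgs : HasGlobalSupport X) :
    HasFactorableCongruences X ↔ RegularlyCoextensive X := by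
  have := IsRegularCategory.regular C
  exact ⟨fun h => h.regularlyCoextensive hgs, fun h => h.hasFactorableCongruences⟩
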